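/- Suppose the side information at each receiver is a deterministic function of the interfering source: V1 = h1(U1) is observed at Receiver 2 and V2 = h2(U2) is observed at Receiver 1, for deterministic functions h1, h2 applied letterwise. If the quadruple (H(V1), H(U1|V1), H(V2), H(U2|V2)) lies in the interior of the capacity region C_I of the interference channel with message side information at the receivers, then the sources U1 and U2 can be transmitted reliably to their respective receivers. Conversely, if (H(V1), H(U1|V1), H(V2), H(U2|V2)) is not in C_I, then the sources cannot be transmitted reliably. -/

import Mathlib

open Finset Real Filter
open scoped Classical

namespace Paper

/-- `p` is a probability mass function on the finite type `α`. -/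
def IsPMF {α : Type*} [Fintype α] (p : α → ℝ) : Prop :=
  (∀ a, 0 ≤ p a) ∧ ∑ a, p a = 1

/-- `k` is a transition probability (channel) from `α` to the finite type `β`. -/
def IsKernel {α β : Type*} [Fintype β] (k : α → β → ℝ) : Prop :=
  ∀ a, IsPMF (k a)

variable {Ω : Type*} [Fintype Ω]

/-- Probability that the random variable `X` takes the value `x`, under the weight `p`. -/
noncomputable def pr {α : Type*} (p : Ω → ℝ) (X : Ω → α) (x : α) : ℝ :=
  ∑ ω, if X ω = x then p ω else 0

/-- Shannon entropy (base 2) of the random variable `X` under `p`. -/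
noncomputable def ent {α : Type*} [Fintype α] (p : Ω → ℝ) (X : Ω → α) : ℝ :=
  ∑ x, -(pr p X x * Real.logb 2 (pr p X x))

/-- Conditional entropy `H(X|Y) = H(X,Y) - H(Y)`. -/
noncomputable def condEnt {α β : Type*} [Fintype α] [Fintype β]
    (p : Ω → ℝ) (X : Ω → α) (Y : Ω → β) : ℝ :=
  ent p (fun ω => (X ω, Y ω)) - ent p Y

/-- Mutual information `I(X;Y) = H(X) + H(Y) - H(X,Y)`. -/
noncomputable def mi {α β : Type*} [Fintype α] [Fintype β]
    (p : Ω → ℝ) (X : Ω → α) (Y : Ω → β) : ℝ :=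
  ent p X + ent p Y - ent p (fun ω => (X ω, Y ω))

/-- Conditional mutual information `I(X;Y|Z) = H(X,Z) + H(Y,Z) - H(X,Y,Z) - H(Z)`. -/
noncomputable def cmi {α β γ : Type*} [Fintype α] [Fintype β] [Fintype γ]
    (p : Ω → ℝ) (X : Ω → α) (Y : Ω → β) (Z : Ω → γ) : ℝ :=
  ent p (fun ω => (X ω, Z ω)) + ent p (fun ω => (Y ω, Z ω))
    - ent p (fun ω => (X ω, Y ω, Z ω)) - ent p Z

/-- The Markov chain `A → B → C`: `A` and `C` are conditionally independent given `B`. -/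
def MarkovChain {α β γ : Type*} (p : Ω → ℝ) (A : Ω → α) (B : Ω → β) (C : Ω → γ) : Prop :=
  ∀ a b c, pr p (fun ω => (A ω, B ω, C ω)) (a, b, c) * pr p B b =
    pr p (fun ω => (A ω, B ω)) (a, b) * pr p (fun ω => (B ω, C ω)) (b, c)

/-! ## Statement 4: source-channel separation when the side information is a
deterministic function of the interfering source. -/

section Stmt4

variable {U1 V1 U2 V2 X1 X2 Y1 Y2 : Type}
  [Fintype U1] [Fintype V1] [Fintype U2] [Fintype V2]
  [Fintype X1] [Fintype X2] [Fintype Y1] [Fintype Y2]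

/-- Average error probability of a length-`n` code for the interference channel with
message side information `W_1s` at Receiver 2 and `W_2s` at Receiver 1. -/
noncomputable def PerrMsg (ch : X1 × X2 → Y1 × Y2 → ℝ) (n M1s M1p M2s M2p : ℕ)
    (f1 : Fin M1s × Fin M1p → Fin n → X1) (f2 : Fin M2s × Fin M2p → Fin n → X2)
    (g1 : (Fin n → Y1) → Fin M2s → Fin M1s × Fin M1p)
    (g2 : (Fin n → Y2) → Fin M1s → Fin M2s × Fin M2p) : ℝ :=
  (1 / ((M1s : ℝ) * M1p * M2s * M2p)) *
    ∑ w1 : Fin M1s × Fin M1p, ∑ w2 : Fin M2s × Fin M2p, ∑ y : Fin n → Y1 × Y2,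
      (∏ i, ch (f1 w1 i, f2 w2 i) (y i)) *
      (if g1 (fun i => (y i).1) w2.1 = w1 ∧ g2 (fun i => (y i).2) w1.1 = w2 then 0 else 1)

/-- Achievability of a rate quadruple `(R1s, R1p, R2s, R2p)` for the interference channel
with message side information at the receivers. -/
def AchMsg (ch : X1 × X2 → Y1 × Y2 → ℝ) (R : ℝ × ℝ × ℝ × ℝ) : Prop :=
  ∃ (M1s M1p M2s M2p : ℕ → ℕ)
    (f1 : ∀ n : ℕ, Fin (M1s n) × Fin (M1p n) → Fin n → X1)
    (f2 : ∀ n : ℕ, Fin (M2s n) × Fin (M2p n) → Fin n → X2)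
    (g1 : ∀ n : ℕ, (Fin n → Y1) → Fin (M2s n) → Fin (M1s n) × Fin (M1p n))
    (g2 : ∀ n : ℕ, (Fin n → Y2) → Fin (M1s n) → Fin (M2s n) × Fin (M2p n)),
    (∀ n : ℕ, 0 < n →
      R.1 ≤ Real.logb 2 (M1s n) / n ∧ R.2.1 ≤ Real.logb 2 (M1p n) / n ∧
      R.2.2.1 ≤ Real.logb 2 (M2s n) / n ∧ R.2.2.2 ≤ Real.logb 2 (M2p n) / n) ∧
    Tendsto (fun n => PerrMsg ch n (M1s n) (M1p n) (M2s n) (M2p n)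
      (f1 n) (f2 n) (g1 n) (g2 n)) atTop (nhds 0)

/-- The capacity region `C_I`: the closure of the set of achievable rate quadruples. -/
noncomputable def capMsg (ch : X1 × X2 → Y1 × Y2 → ℝ) : Set (ℝ × ℝ × ℝ × ℝ) :=
  closure { R | AchMsg ch R }

/-- Error probability of a length-`n` joint source-channel code when the side information
is the deterministic function `V1 = h1(U1)` (available at Receiver 2) and `V2 = h2(U2)`
(available at Receiver 1). -/
noncomputable def PerrDet (ch : X1 × X2 → Y1 × Y2 → ℝ)
    (pU1 : U1 → ℝ) (h1 : U1 → V1) (pU2 : U2 → ℝ) (h2 : U2 → V2) (n : ℕ)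
    (f1 : (Fin n → U1) → Fin n → X1) (f2 : (Fin n → U2) → Fin n → X2)
    (g1 : (Fin n → Y1) → (Fin n → V2) → Fin n → U1)
    (g2 : (Fin n → Y2) → (Fin n → V1) → Fin n → U2) : ℝ :=
  ∑ u1 : Fin n → U1, ∑ u2 : Fin n → U2, ∑ y : Fin n → Y1 × Y2,
    (∏ i, pU1 (u1 i)) * (∏ i, pU2 (u2 i)) * (∏ i, ch (f1 u1 i, f2 u2 i) (y i)) *
    (if g1 (fun i => (y i).1) (fun i => h2 (u2 i)) = u1 ∧
        g2 (fun i => (y i).2) (fun i => h1 (u1 i)) = u2 then 0 else 1)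

/-- Reliable transmission with deterministic side information about the interfering source. -/
def ReliableDet (ch : X1 × X2 → Y1 × Y2 → ℝ)
    (pU1 : U1 → ℝ) (h1 : U1 → V1) (pU2 : U2 → ℝ) (h2 : U2 → V2) : Prop :=
  ∃ (f1 : ∀ n : ℕ, (Fin n → U1) → Fin n → X1)
    (f2 : ∀ n : ℕ, (Fin n → U2) → Fin n → X2)
    (g1 : ∀ n : ℕ, (Fin n → Y1) → (Fin n → V2) → Fin n → U1)
    (g2 : ∀ n : ℕ, (Fin n → Y2) → (Fin n → V1) → Fin n → U2),
    Tendsto (fun n => PerrDet ch pU1 h1 pU2 h2 n (f1 n) (f2 n) (g1 n) (g2 n)) atTop (nhds 0)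

/-!
Both directions convert a code for one pair of sources into a code for another pair by randomized
preprocessing with a seed known to all terminals. If each simulated source output has exactly the
law for which the given code was designed, then the converted code inherits its error probability,
up to the probability that a simulation fails; a good value of the seed can finally be fixed.

For the converse, messages are carried by a random superposition code whose cloud centres have the
law of `V` and whose satellites have the conditional law of `U` given `V`. At rates below `H(V)` and
`H(U|V)` two codewords are unlikely to collide, so messages can be read off from `U`. For the direct
part, likely outputs of `U` are indexed by a common part, a function of `V`, and a private part; a
uniform shift turns the index into a uniform message. At rates above the two entropies unlikely
outputs have vanishing probability.
-/

section Expectation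

variable {α β γ : Type*} [Fintype α] [Fintype β] [Fintype γ]

/-- The expectation of `f` under the weight `p`. -/
noncomputable def mean (p f : α → ℝ) : ℝ :=
  ∑ a, p a * f a

/-- The probability of the event `s` under the weight `p`. -/
noncomputable def prob (p : α → ℝ) (s : Set α) : ℝ :=
  mean p (s.indicator 1)

lemma mean_mono {p f g : α → ℝ} (hp : ∀ a, 0 ≤ p a) (h : ∀ a, f a ≤ g a) :
    mean p f ≤ mean p g :=
  Finset.sum_le_sum fun a _ => mul_le_mul_of_nonneg_left (h a) (hp a)

lemma mean_nonneg {p f : α → ℝ} (hp : ∀ a, 0 ≤ p a) (hf : ∀ a, 0 ≤ f a) : 0 ≤ mean p f :=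
  Finset.sum_nonneg fun a _ => mul_nonneg (hp a) (hf a)

lemma mean_add (p f g : α → ℝ) : mean p (fun a => f a + g a) = mean p f + mean p g := by
  simp only [mean, mul_add, Finset.sum_add_distrib]

lemma mean_sub (p f g : α → ℝ) : mean p (fun a => f a - g a) = mean p f - mean p g := by
  simp only [mean, mul_sub, Finset.sum_sub_distrib]

lemma mean_neg (p f : α → ℝ) : mean p (fun a => -f a) = -mean p f := by
  simp only [mean, mul_neg, Finset.sum_neg_distrib]

lemma mean_const_mul (p f : α → ℝ) (c : ℝ) : mean p (fun a => c * f a) = c * mean p f := by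
  simp only [mean, Finset.mul_sum, mul_left_comm]

lemma mean_mul_const (p f : α → ℝ) (c : ℝ) : mean p (fun a => f a * c) = mean p f * c := by
  simp only [mean, Finset.sum_mul, mul_assoc]

lemma mean_finset_sum {ι : Type*} (p : α → ℝ) (s : Finset ι) (f : ι → α → ℝ) :
    mean p (fun a => ∑ i ∈ s, f i a) = ∑ i ∈ s, mean p (f i) := by
  simp only [mean, Finset.mul_sum]
  exact Finset.sum_comm

lemma mean_const {p : α → ℝ} (hp : IsPMF p) (c : ℝ) : mean p (fun _ => c) = c := by
  rw [mean, ← Finset.sum_mul, hp.2, one_mul]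

lemma mean_le_of_forall_le {p f : α → ℝ} (hp : IsPMF p) {c : ℝ} (h : ∀ a, f a ≤ c) :
    mean p f ≤ c :=
  (mean_mono hp.1 h).trans_eq (mean_const hp c)

lemma mean_comm (p : α → ℝ) (q : β → ℝ) (f : α → β → ℝ) :
    mean p (fun a => mean q (f a)) = mean q fun b => mean p fun a => f a b := by
  simp only [mean, Finset.mul_sum, mul_left_comm (p _)]
  exact Finset.sum_comm

lemma mean_rotate (p : α → ℝ) (q : β → ℝ) (r : γ → ℝ) (f : α → β → γ → ℝ) :
    mean p (fun a => mean q fun b => mean r (f a b)) =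
      mean r fun c => mean p fun a => mean q fun b => f a b c :=
  (congrArg (mean p) (funext fun a => mean_comm q r (f a))).trans (mean_comm p r _)

lemma mean_pr (p : α → ℝ) (X : α → β) (f : β → ℝ) : mean (pr p X) f = mean p (f ∘ X) := by
  simp only [mean, pr, Finset.sum_mul, ite_mul, zero_mul]
  rw [Finset.sum_comm]
  simp

lemma IsPMF.pr {p : α → ℝ} (hp : IsPMF p) (X : α → β) : IsPMF (pr p X) := by
  refine ⟨fun x => Finset.sum_nonneg fun a _ => ?_, ?_⟩
  · split_ifs
    exacts [hp.1 a, le_rfl]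
  · simpa [mean, hp.2] using mean_pr p X 1

lemma IsPMF.exists_ne_zero {p : α → ℝ} (hp : IsPMF p) : ∃ a, p a ≠ 0 := by
  by_contra! h
  simpa [h] using hp.2

lemma IsPMF.nonempty {p : α → ℝ} (hp : IsPMF p) : Nonempty α :=
  hp.exists_ne_zero.nonempty

lemma IsPMF.le_one {p : α → ℝ} (hp : IsPMF p) (a : α) : p a ≤ 1 :=
  (Finset.single_le_sum (fun b _ => hp.1 b) (Finset.mem_univ a)).trans_eq hp.2

lemma IsPMF.exists_le_mean {p : α → ℝ} (hp : IsPMF p) (f : α → ℝ) : ∃ a, f a ≤ mean p f := by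
  by_contra! h
  obtain ⟨a, ha⟩ := hp.exists_ne_zero
  refine lt_irrefl (mean p f) ?_
  calc mean p f = mean p fun _ => mean p f := (mean_const hp _).symm
    _ < mean p f := Finset.sum_lt_sum (fun b _ => mul_le_mul_of_nonneg_left (h b).le (hp.1 b))
        ⟨a, Finset.mem_univ a, mul_lt_mul_of_pos_left (h a) ((hp.1 a).lt_of_ne' ha)⟩

lemma prob_nonneg {p : α → ℝ} (hp : ∀ a, 0 ≤ p a) (s : Set α) : 0 ≤ prob p s :=
  mean_nonneg hp (Set.indicator_nonneg fun _ _ => zero_le_one)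

lemma prob_mono {p : α → ℝ} (hp : ∀ a, 0 ≤ p a) {s t : Set α}
    (h : ∀ a, p a ≠ 0 → a ∈ s → a ∈ t) : prob p s ≤ prob p t := by
  refine Finset.sum_le_sum fun a _ => ?_
  rcases eq_or_ne (p a) 0 with ha | ha
  · simp [ha]
  · refine mul_le_mul_of_nonneg_left ?_ (hp a)
    by_cases has : a ∈ s
    · rw [Set.indicator_of_mem has, Set.indicator_of_mem (h a ha has)]
    · rw [Set.indicator_of_notMem has]
      exact Set.indicator_nonneg (fun _ _ => zero_le_one) a

lemma prob_univ {p : α → ℝ} (hp : IsPMF p) : prob p Set.univ = 1 := by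
  rw [prob, Set.indicator_univ]
  exact mean_const hp 1

lemma prob_le_one {p : α → ℝ} (hp : IsPMF p) (s : Set α) : prob p s ≤ 1 :=
  (prob_mono hp.1 fun a _ _ => Set.mem_univ a).trans_eq (prob_univ hp)

lemma prob_empty (p : α → ℝ) : prob p ∅ = 0 := by
  simp [prob, mean]

lemma prob_singleton (p : α → ℝ) (a : α) : prob p {a} = p a := by
  simp [prob, mean, Set.indicator_apply]

lemma prob_union_le {p : α → ℝ} (hp : ∀ a, 0 ≤ p a) (s t : Set α) :
    prob p (s ∪ t) ≤ prob p s + prob p t := by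
  rw [prob, prob, prob, ← mean_add]
  refine mean_mono hp fun a => ?_
  by_cases hs : a ∈ s <;> by_cases ht : a ∈ t <;> simp [hs, ht]

lemma prob_biUnion_le {ι : Type*} {p : α → ℝ} (hp : ∀ a, 0 ≤ p a) (I : Finset ι)
    (s : ι → Set α) : prob p (⋃ i ∈ I, s i) ≤ ∑ i ∈ I, prob p (s i) := by
  induction I using Finset.induction_on with
  | empty => simp [prob_empty]
  | insert i I hi ih =>
    rw [Finset.set_biUnion_insert, Finset.sum_insert hi]
    linarith [prob_union_le hp (s i) (⋃ j ∈ I, s j)]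

lemma prob_pr (p : α → ℝ) (X : α → β) (s : Set β) : prob (pr p X) s = prob p (X ⁻¹' s) :=
  mean_pr p X _

lemma pr_eq_prob {β : Type*} (p : α → ℝ) (X : α → β) (x : β) :
    pr p X x = prob p (X ⁻¹' {x}) := by
  simp [pr, prob, mean, Set.indicator_apply]

lemma pr_pr {γ : Type*} (p : α → ℝ) (X : α → β) (g : β → γ) :
    pr (pr p X) g = pr p (g ∘ X) := by
  ext c
  rw [pr_eq_prob, pr_eq_prob, prob_pr]
  rfl

lemma pr_id (p : α → ℝ) : pr p id = p := by
  ext a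
  rw [pr_eq_prob, Set.preimage_id, prob_singleton]

lemma pr_nonneg {β : Type*} {p : α → ℝ} (hp : ∀ a, 0 ≤ p a) (X : α → β) (x : β) :
    0 ≤ pr p X x :=
  (prob_nonneg hp _).trans_eq (pr_eq_prob p X x).symm

lemma le_pr_self {β : Type*} {p : α → ℝ} (hp : ∀ a, 0 ≤ p a) (X : α → β) (a : α) :
    p a ≤ pr p X (X a) := by
  rw [pr_eq_prob, ← prob_singleton p a]
  exact prob_mono hp fun b _ hb => congrArg X hb

lemma pr_self_pos {β : Type*} {p : α → ℝ} (hp : ∀ a, 0 ≤ p a) (X : α → β) {a : α}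
    (ha : p a ≠ 0) : 0 < pr p X (X a) :=
  ((hp a).lt_of_ne' ha).trans_le (le_pr_self hp X a)

lemma prob_le_mean_sq_div_sq {p : α → ℝ} (hp : ∀ a, 0 ≤ p a) (f : α → ℝ) {c : ℝ} (hc : 0 < c) :
    prob p {a | c ≤ f a} ≤ mean p (fun a => f a ^ 2) / c ^ 2 := by
  rw [div_eq_mul_inv, ← mean_mul_const]
  refine mean_mono hp fun a => Set.indicator_apply_le' (fun ha => ?_) fun _ => by positivity
  rw [← div_eq_mul_inv, Pi.one_apply, one_le_div (by positivity)]
  exact pow_le_pow_left₀ hc.le ha 2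

end Expectation

section ProductLaw

variable {α β ι : Type*} [Fintype α] [Fintype β] [Fintype ι] [DecidableEq ι]

/-- The law of a pair whose first entry has law `q` and whose second entry, given that the first
one is `a`, has law `k a`. -/
def joint (q : α → ℝ) (k : α → β → ℝ) : α × β → ℝ :=
  fun x => q x.1 * k x.1 x.2

/-- The law of a tuple of independent entries, the `i`-th of which has law `p i`. -/
def piLaw (p : ι → α → ℝ) : (ι → α) → ℝ :=
  fun φ => ∏ i, p i (φ i)

/-- The law of `n` independent samples of `p`. -/
abbrev iid (p : α → ℝ) (n : ℕ) : (Fin n → α) → ℝ :=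
  piLaw fun _ => p

lemma mean_joint (q : α → ℝ) (k : α → β → ℝ) (f : α × β → ℝ) :
    mean (joint q k) f = mean q fun a => mean (k a) fun b => f (a, b) := by
  simp only [mean, joint, Fintype.sum_prod_type, Finset.mul_sum, mul_assoc]

lemma prob_joint (q : α → ℝ) (k : α → β → ℝ) (s : Set (α × β)) :
    prob (joint q k) s = mean q fun a => prob (k a) {b | (a, b) ∈ s} :=
  mean_joint q k _

lemma IsPMF.joint {q : α → ℝ} {k : α → β → ℝ} (hq : IsPMF q) (hk : IsKernel k) :
    IsPMF (joint q k) := by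
  refine ⟨fun x => mul_nonneg (hq.1 _) ((hk _).1 _), ?_⟩
  simp only [Paper.joint, Fintype.sum_prod_type, ← Finset.mul_sum, (hk _).2, mul_one, hq.2]

lemma pr_joint_map_right {γ : Type*} (q : α → ℝ) (k : α → β → ℝ) (X : β → γ) :
    pr (joint q k) (fun x => (x.1, X x.2)) = joint q fun a => pr (k a) X := by
  ext ⟨a, c⟩
  simp only [pr, joint, Fintype.sum_prod_type, Prod.mk.injEq]
  rw [Fintype.sum_eq_single a fun b hb => by simp [hb]]
  simp [Finset.mul_sum]

lemma pr_fst_joint (q : α → ℝ) {k : α → β → ℝ} (hk : IsKernel k) :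
    pr (joint q k) Prod.fst = q := by
  ext a
  simp only [pr, joint, Fintype.sum_prod_type]
  rw [Fintype.sum_eq_single a fun b hb => by simp [hb]]
  simp [← Finset.mul_sum, (hk a).2]

lemma IsPMF.piLaw {p : ι → α → ℝ} (hp : IsKernel p) : IsPMF (piLaw p) := by
  refine ⟨fun φ => Finset.prod_nonneg fun i _ => (hp i).1 _, ?_⟩
  simp only [Paper.piLaw]
  rw [← Fintype.piFinset_univ, ← Finset.prod_univ_sum]
  exact Finset.prod_eq_one fun i _ => (hp i).2

lemma IsPMF.iid {p : α → ℝ} (hp : IsPMF p) (n : ℕ) : IsPMF (iid p n) :=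
  IsPMF.piLaw fun _ => hp

lemma ne_zero_of_piLaw_ne_zero {α ι : Type*} [Fintype ι] {p : ι → α → ℝ} {φ : ι → α}
    (hφ : piLaw p φ ≠ 0) (i : ι) : p i (φ i) ≠ 0 :=
  Finset.prod_ne_zero_iff.mp hφ i (Finset.mem_univ i)

lemma prob_piLaw_pi (p : ι → α → ℝ) (s : ι → Set α) :
    prob (piLaw p) (Set.univ.pi s) = ∏ i, prob (p i) (s i) := by
  simp only [prob, mean, piLaw]
  rw [Finset.prod_univ_sum, Fintype.piFinset_univ]
  refine Finset.sum_congr rfl fun φ _ => ?_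
  rw [Finset.prod_mul_distrib]
  congr 1
  simp only [Set.indicator_apply, Set.mem_univ_pi, Pi.one_apply, Finset.prod_ite_zero]
  simp

lemma pr_comp_piLaw {γ : Type*} (p : ι → α → ℝ) (X : α → γ) :
    pr (piLaw p) (fun φ => X ∘ φ) = piLaw fun i => pr (p i) X := by
  ext v
  have hpre : (fun φ : ι → α => X ∘ φ) ⁻¹' {v} = Set.univ.pi fun i => X ⁻¹' {v i} := by
    ext φ
    simp [funext_iff]
  simp only [pr_eq_prob, hpre, prob_piLaw_pi, piLaw]

lemma pr_eval_piLaw {p : ι → α → ℝ} (hp : IsKernel p) (j : ι) :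
    pr (piLaw p) (fun φ => φ j) = p j := by
  ext a
  have hpre : (fun φ : ι → α => φ j) ⁻¹' {a} =
      Set.univ.pi (Function.update (fun _ : ι => (Set.univ : Set α)) j {a}) := by
    ext φ
    simp [Function.update_apply]
  rw [pr_eq_prob, hpre, prob_piLaw_pi, Fintype.prod_eq_single j fun i hi => ?_,
    Function.update_self, prob_singleton]
  rw [Function.update_of_ne hi, prob_univ (hp i)]

lemma pr_eval_pair_piLaw {p : ι → α → ℝ} (hp : IsKernel p) {j k : ι} (hjk : j ≠ k) :
    pr (piLaw p) (fun φ => (φ j, φ k)) = joint (p j) fun _ => p k := by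
  ext ⟨a, b⟩
  have hpre : (fun φ : ι → α => (φ j, φ k)) ⁻¹' {(a, b)} =
      Set.univ.pi
        (Function.update (Function.update (fun _ : ι => (Set.univ : Set α)) j {a}) k {b}) := by
    ext φ
    simp only [Set.mem_preimage, Set.mem_singleton_iff, Prod.mk.injEq, Set.mem_univ_pi]
    refine ⟨fun h i => ?_, fun h => ⟨?_, ?_⟩⟩
    · by_cases hik : i = k <;> by_cases hij : i = j <;> simp_all
    · simpa [Function.update_of_ne hjk] using h j
    · simpa using h k
  rw [pr_eq_prob, hpre, prob_piLaw_pi, Fintype.prod_eq_mul j k hjk fun i hi => ?_]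
  · simp [Function.update_of_ne hjk, prob_singleton, joint]
  · rw [Function.update_of_ne hi.2, Function.update_of_ne hi.1, prob_univ (hp i)]

end ProductLaw

section LimitTheorems

variable {α : Type*} [Fintype α] {p : α → ℝ}

lemma mean_iid_sq_sum (hp : IsPMF p) {Z : α → ℝ} (hZ : mean p Z = 0) (n : ℕ) :
    mean (iid p n) (fun u => (∑ i, Z (u i)) ^ 2) = n * mean p fun a => Z a ^ 2 := by
  have covariance (i j : Fin n) : mean (iid p n) (fun u => Z (u i) * Z (u j)) =
      if i = j then mean p fun a => Z a ^ 2 else 0 := by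
    split_ifs with hij
    · rw [← hij]
      simp only [← sq]
      calc mean (iid p n) (fun u => Z (u i) ^ 2)
          = mean (pr (iid p n) fun u => u i) fun a => Z a ^ 2 :=
            (mean_pr (iid p n) (fun u => u i) fun a => Z a ^ 2).symm
        _ = mean p fun a => Z a ^ 2 := by rw [pr_eval_piLaw fun _ => hp]
    · calc mean (iid p n) (fun u => Z (u i) * Z (u j))
          = mean (pr (iid p n) fun u => (u i, u j)) fun x => Z x.1 * Z x.2 :=
            (mean_pr (iid p n) (fun u => (u i, u j)) fun x => Z x.1 * Z x.2).symm
        _ = mean p Z * mean p Z := by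
            rw [pr_eval_pair_piLaw (fun _ => hp) hij, mean_joint]
            simp only [mean_const_mul, mean_mul_const]
        _ = 0 := by rw [hZ, zero_mul]
  simp only [sq (Finset.sum _ _), Finset.sum_mul_sum, mean_finset_sum, covariance]
  simp

lemma tendsto_prob_le_sum (hp : IsPMF p) {X : α → ℝ} {c : ℝ} (hc : mean p X < c) :
    Tendsto (fun n : ℕ => prob (iid p n) {u | n * c ≤ ∑ i, X (u i)}) atTop (nhds 0) := by
  set Z : α → ℝ := fun a => X a - mean p X
  have hZ : mean p Z = 0 := by rw [mean_sub, mean_const hp, sub_self]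
  set d := c - mean p X
  have hd : 0 < d := sub_pos.mpr hc
  have chebyshev {n : ℕ} (hn : 0 < n) :
      prob (iid p n) {u | n * c ≤ ∑ i, X (u i)} ≤ (mean p fun a => Z a ^ 2) / d ^ 2 / n := by
    have hnd : 0 < n * d := by positivity
    calc prob (iid p n) {u | n * c ≤ ∑ i, X (u i)}
        ≤ prob (iid p n) {u | n * d ≤ ∑ i, Z (u i)} := by
          refine prob_mono (hp.iid n).1 fun u _ hu => ?_
          have hu : n * c ≤ ∑ i, X (u i) := hu
          simpa [Z, d, mul_sub] using hu
      _ ≤ _ := prob_le_mean_sq_div_sq (hp.iid n).1 _ hnd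
      _ = _ := by
          rw [mean_iid_sq_sum hp hZ]
          field_simp
  exact squeeze_zero' (.of_forall fun n => prob_nonneg (hp.iid n).1 _)
    ((eventually_gt_atTop 0).mono fun n => chebyshev) (tendsto_const_div_atTop_nhds_zero_nat _)

lemma tendsto_prob_lt_prod (hp : IsPMF p) {r : α → ℝ} (hr : ∀ a, p a ≠ 0 → 0 < r a) {R : ℝ}
    (hR : R < mean p fun a => -logb 2 (r a)) :
    Tendsto (fun n : ℕ => prob (iid p n) {u | (2 : ℝ) ^ (-(n * R)) < ∏ i, r (u i)})
      atTop (nhds 0) := by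
  have hX : (mean p fun a => logb 2 (r a)) < -R := by
    rw [mean_neg] at hR
    linarith
  refine squeeze_zero (fun n => prob_nonneg (hp.iid n).1 _) (fun n => ?_)
    (tendsto_prob_le_sum hp hX)
  refine prob_mono (hp.iid n).1 fun u hu hlt => ?_
  have hpos (i : Fin n) : 0 < r (u i) := hr _ (ne_zero_of_piLaw_ne_zero hu i)
  change n * -R ≤ ∑ i, logb 2 (r (u i))
  rw [← logb_prod _ _ fun i _ => (hpos i).ne', mul_neg,
    le_logb_iff_rpow_le one_lt_two (Finset.prod_pos fun i _ => hpos i)]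
  exact le_of_lt hlt

lemma tendsto_prob_prod_lt (hp : IsPMF p) {r : α → ℝ} (hr : ∀ a, p a ≠ 0 → 0 < r a) {R : ℝ}
    (hR : (mean p fun a => -logb 2 (r a)) < R) :
    Tendsto (fun n : ℕ => prob (iid p n) {u | ∏ i, r (u i) < (2 : ℝ) ^ (-(n * R))})
      atTop (nhds 0) := by
  refine squeeze_zero (fun n => prob_nonneg (hp.iid n).1 _) (fun n => ?_)
    (tendsto_prob_le_sum hp hR)
  refine prob_mono (hp.iid n).1 fun u hu hlt => ?_
  have hpos (i : Fin n) : 0 < r (u i) := hr _ (ne_zero_of_piLaw_ne_zero hu i)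
  change n * R ≤ ∑ i, -logb 2 (r (u i))
  rw [Finset.sum_neg_distrib, le_neg, ← logb_prod _ _ fun i _ => (hpos i).ne',
    logb_le_iff_le_rpow one_lt_two (Finset.prod_pos fun i _ => hpos i)]
  exact le_of_lt hlt

end LimitTheorems

section ConditionalLaw

variable {A S : Type*} [Fintype A]

/-- The conditional law of a random variable of law `P` given the value `s` of its function `σ`.
Where the conditioning event has probability zero it is defined to be `P`, so that it is always
a transition probability. -/
noncomputable def condLaw (P : A → ℝ) (σ : A → S) (s : S) (a : A) : ℝ :=
  if pr P σ s = 0 then P a else if σ a = s then P a / pr P σ s else 0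

lemma isKernel_condLaw {P : A → ℝ} (hP : IsPMF P) (σ : A → S) : IsKernel (condLaw P σ) := by
  intro s
  by_cases hs : pr P σ s = 0
  · rwa [show condLaw P σ s = P from funext fun a => if_pos hs]
  · simp only [IsPMF, condLaw, hs, if_false]
    refine ⟨fun a => ?_, ?_⟩
    · split_ifs
      exacts [div_nonneg (hP.1 a) (pr_nonneg hP.1 σ s), le_rfl]
    · calc (∑ a, if σ a = s then P a / pr P σ s else 0)
          = (∑ a, if σ a = s then P a else 0) / pr P σ s := by
            simp only [Finset.sum_div, ite_div, zero_div]
        _ = 1 := div_self hs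

lemma condLaw_self {P : A → ℝ} (hP : ∀ a, 0 ≤ P a) (σ : A → S) {a : A} (ha : P a ≠ 0) :
    condLaw P σ (σ a) a = P a / pr P σ (σ a) := by
  rw [condLaw, if_neg (pr_self_pos hP σ ha).ne', if_pos rfl]

lemma condLaw_self_pos {P : A → ℝ} (hP : ∀ a, 0 ≤ P a) (σ : A → S) {a : A}
    (ha : P a ≠ 0) : 0 < condLaw P σ (σ a) a := by
  rw [condLaw_self hP σ ha]
  exact div_pos ((hP a).lt_of_ne' ha) (pr_self_pos hP σ ha)

lemma eq_of_condLaw_ne_zero {P : A → ℝ} {σ : A → S} {s : S} {a : A} (hs : pr P σ s ≠ 0)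
    (ha : condLaw P σ s a ≠ 0) : σ a = s := by
  by_contra hne
  exact ha (by simp only [condLaw, hs, hne, if_false])

lemma joint_pr_condLaw {P : A → ℝ} (hP : ∀ a, 0 ≤ P a) (σ : A → S) :
    joint (pr P σ) (condLaw P σ) = pr P fun a => (σ a, a) := by
  ext ⟨s, a⟩
  have hright : pr P (fun a => (σ a, a)) (s, a) = if σ a = s then P a else 0 := by
    simp only [pr, Prod.mk.injEq]
    rw [Fintype.sum_eq_single a fun b hb => by simp [hb]]
    simp
  rw [hright, joint, condLaw]
  by_cases hs : pr P σ s = 0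
  · have hPa : σ a = s → P a = 0 := by
      rintro rfl
      by_contra ha
      exact (pr_self_pos hP σ ha).ne' hs
    by_cases ha : σ a = s <;> simp [hs, ha, hPa]
  · by_cases ha : σ a = s <;> simp [hs, ha, mul_div_cancel₀]

lemma condLaw_iid {p : A → ℝ} (hp : IsPMF p) (h : A → S) {n : ℕ} {u : Fin n → A}
    (hu : iid p n u ≠ 0) :
    condLaw (iid p n) (h ∘ ·) (h ∘ u) u = ∏ i, condLaw p h (h (u i)) (u i) := by
  rw [condLaw_self (hp.iid n).1 (h ∘ ·) hu, pr_comp_piLaw]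
  simp only [condLaw_self hp.1 h (ne_zero_of_piLaw_ne_zero hu _), Finset.prod_div_distrib]
  rfl

end ConditionalLaw

section Entropy

variable {α β γ : Type*} [Fintype α] [Fintype β] [Fintype γ] {p : α → ℝ}

lemma ent_eq_mean (p : α → ℝ) (X : α → β) :
    ent p X = mean p fun a => -logb 2 (pr p X (X a)) := by
  calc ent p X = mean (pr p X) fun x => -logb 2 (pr p X x) := by simp only [ent, mean, mul_neg]
    _ = _ := mean_pr p X _

lemma ent_nonneg (hp : IsPMF p) (X : α → β) : 0 ≤ ent p X := by
  rw [ent_eq_mean]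
  exact mean_nonneg hp.1 fun a => neg_nonneg.mpr <|
    logb_nonpos one_lt_two ((hp.pr X).1 _) ((hp.pr X).le_one _)

lemma condEnt_id_eq_mean (hp : IsPMF p) (X : α → β) :
    condEnt p id X = mean p fun a => -logb 2 (condLaw p X (X a) a) := by
  rw [condEnt, ent_eq_mean, ent_eq_mean, ← mean_sub]
  refine Finset.sum_congr rfl fun a _ => ?_
  rcases eq_or_ne (p a) 0 with ha | ha
  · simp [ha]
  have hpair : pr p (fun a => (id a, X a)) (id a, X a) = p a := by
    simp only [pr, id, Prod.mk.injEq]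
    rw [Fintype.sum_eq_single a fun b hb => by simp [hb]]
    simp
  beta_reduce
  rw [hpair, condLaw_self hp.1 X ha, logb_div ha (pr_self_pos hp.1 X ha).ne']
  ring

lemma condEnt_id_nonneg (hp : IsPMF p) (X : α → β) : 0 ≤ condEnt p id X := by
  rw [condEnt_id_eq_mean hp]
  exact mean_nonneg hp.1 fun a => neg_nonneg.mpr <|
    logb_nonpos one_lt_two ((isKernel_condLaw hp X _).1 a) ((isKernel_condLaw hp X _).le_one a)

end Entropy

section Codes

/-- A random source of law `law`, of which the receiver it is not intended for observes `side`. -/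
structure Source (A S : Type) where
  law : A → ℝ
  side : A → S

variable {A₁ A₂ B₁ B₂ S₁ S₂ T₁ T₂ I₁ I₂ O₁ O₂ : Type}
  [Fintype O₁] [Fintype O₂]

/-- The probability that a code for the interference channel `W` does not reproduce both source
outputs `a₁` and `a₂`, given that these are the source outputs. -/
noncomputable def condErrProb (W : I₁ × I₂ → O₁ × O₂ → ℝ) (s₁ : Source A₁ S₁) (s₂ : Source A₂ S₂)
    (f₁ : A₁ → I₁) (f₂ : A₂ → I₂) (g₁ : O₁ → S₂ → A₁) (g₂ : O₂ → S₁ → A₂)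
    (a₁ : A₁) (a₂ : A₂) : ℝ :=
  prob (W (f₁ a₁, f₂ a₂)) {y | ¬(g₁ y.1 (s₂.side a₂) = a₁ ∧ g₂ y.2 (s₁.side a₁) = a₂)}

/-- A randomized way of sending the source `t` by means of a code for the source `s`, with a seed
known to all terminals: outputs of `t` are encoded as outputs of `s`, side information on `t` is
turned into side information on `s`. Whatever is encoded has exactly the law of `s` when averaged
over the seed, so that the code for `s` retains its error probability. -/
structure RandomReduction {B T A S : Type} (t : Source B T) (s : Source A S) where
  Seed : Type
  [fintypeSeed : Fintype Seed]
  seedLaw : Seed → ℝ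
  isPMF_seedLaw : IsPMF seedLaw
  enc : Seed → B → A
  side : Seed → T → S
  dec : Seed → A → B
  pr_enc : ∀ b, pr seedLaw (fun ν => enc ν b) = s.law

attribute [instance] RandomReduction.fintypeSeed

namespace RandomReduction

variable {B T A S : Type} {t : Source B T} {s : Source A S}

/-- The seed `ν` serves the output `b`: both `b` and the side information on its encoding can be
recovered. -/
def Correct (r : RandomReduction t s) (ν : r.Seed) (b : B) : Prop :=
  r.dec ν (r.enc ν b) = b ∧ r.side ν (t.side b) = s.side (r.enc ν b)

/-- The probability that the seed does not serve the output `b`. -/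
noncomputable def failure (r : RandomReduction t s) (b : B) : ℝ :=
  prob r.seedLaw {ν | ¬r.Correct ν b}

lemma mean_failure_le [Fintype B] (r : RandomReduction t s) (ht : ∀ b, 0 ≤ t.law b)
    {D : Set B} (hD : ∀ b ∈ D, ∀ ν, r.Correct ν b) : mean t.law r.failure ≤ prob t.law Dᶜ := by
  refine mean_mono ht fun b => ?_
  by_cases hb : b ∈ D
  · have hempty : {ν | ¬r.Correct ν b} = ∅ :=
      Set.eq_empty_of_forall_notMem fun ν hν => hν (hD b hb ν)
    rw [Set.indicator_of_notMem (Set.notMem_compl_iff.mpr hb), failure, hempty, prob_empty]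
  · rw [Set.indicator_of_mem (Set.mem_compl hb)]
    exact prob_le_one r.isPMF_seedLaw _

end RandomReduction

lemma condErrProb_comp_le {W : I₁ × I₂ → O₁ × O₂ → ℝ} (hW : IsKernel W)
    {t₁ : Source B₁ T₁} {t₂ : Source B₂ T₂} {s₁ : Source A₁ S₁} {s₂ : Source A₂ S₂}
    (r₁ : RandomReduction t₁ s₁) (r₂ : RandomReduction t₂ s₂)
    (f₁ : A₁ → I₁) (f₂ : A₂ → I₂) (g₁ : O₁ → S₂ → A₁) (g₂ : O₂ → S₁ → A₂)
    (ν₁ : r₁.Seed) (ν₂ : r₂.Seed) (b₁ : B₁) (b₂ : B₂) :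
    condErrProb W t₁ t₂ (f₁ ∘ r₁.enc ν₁) (f₂ ∘ r₂.enc ν₂)
        (fun y v => r₁.dec ν₁ (g₁ y (r₂.side ν₂ v))) (fun y v => r₂.dec ν₂ (g₂ y (r₁.side ν₁ v)))
        b₁ b₂ ≤
      condErrProb W s₁ s₂ f₁ f₂ g₁ g₂ (r₁.enc ν₁ b₁) (r₂.enc ν₂ b₂) +
        {ν | ¬r₁.Correct ν b₁}.indicator 1 ν₁ + {ν | ¬r₂.Correct ν b₂}.indicator 1 ν₂ := by
  by_cases hc : r₁.Correct ν₁ b₁ ∧ r₂.Correct ν₂ b₂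
  · obtain ⟨c₁, c₂⟩ := hc
    simp only [Set.indicator_apply, Set.mem_ofPred_eq, c₁, c₂, not_true, if_false, add_zero]
    refine prob_mono (hW _).1 fun y _ hy hgood => hy ?_
    beta_reduce
    rw [c₁.2, c₂.2, hgood.1, hgood.2]
    exact ⟨c₁.1, c₂.1⟩
  · have hind : (1 : ℝ) ≤
        {ν | ¬r₁.Correct ν b₁}.indicator 1 ν₁ + {ν | ¬r₂.Correct ν b₂}.indicator 1 ν₂ := by
      by_cases c₁ : r₁.Correct ν₁ b₁ <;> by_cases c₂ : r₂.Correct ν₂ b₂ <;> simp_all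
    rw [add_assoc]
    exact (prob_le_one (hW _) _).trans
      (hind.trans (le_add_of_nonneg_left (prob_nonneg (hW _).1 _)))

variable [Fintype A₁] [Fintype A₂]

/-- The error probability of a one-shot joint source-channel code for independent sources over the
interference channel `W`. Block codes are the case where `W` is a power of a memoryless channel. -/
noncomputable def errProb (W : I₁ × I₂ → O₁ × O₂ → ℝ) (s₁ : Source A₁ S₁) (s₂ : Source A₂ S₂)
    (f₁ : A₁ → I₁) (f₂ : A₂ → I₂) (g₁ : O₁ → S₂ → A₁) (g₂ : O₂ → S₁ → A₂) : ℝ :=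
  mean s₁.law fun a₁ => mean s₂.law fun a₂ => condErrProb W s₁ s₂ f₁ f₂ g₁ g₂ a₁ a₂

/-- The sources can be sent over the interference channel `W` with error probability at most `ε`. -/
def HasCode (W : I₁ × I₂ → O₁ × O₂ → ℝ) (s₁ : Source A₁ S₁) (s₂ : Source A₂ S₂) (ε : ℝ) : Prop :=
  ∃ (f₁ : A₁ → I₁) (f₂ : A₂ → I₂) (g₁ : O₁ → S₂ → A₁) (g₂ : O₂ → S₁ → A₂),
    errProb W s₁ s₂ f₁ f₂ g₁ g₂ ≤ ε

lemma errProb_nonneg {W : I₁ × I₂ → O₁ × O₂ → ℝ} (hW : IsKernel W)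
    {s₁ : Source A₁ S₁} {s₂ : Source A₂ S₂} (h₁ : IsPMF s₁.law) (h₂ : IsPMF s₂.law)
    (f₁ : A₁ → I₁) (f₂ : A₂ → I₂) (g₁ : O₁ → S₂ → A₁) (g₂ : O₂ → S₁ → A₂) :
    0 ≤ errProb W s₁ s₂ f₁ f₂ g₁ g₂ :=
  mean_nonneg h₁.1 fun _ => mean_nonneg h₂.1 fun _ => prob_nonneg (hW _).1 _

/-- The source `t` has a randomized reduction to `s` that fails with probability at most `ε`. -/
def Source.Reduces {B T A S : Type} [Fintype B] (t : Source B T) (s : Source A S)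
    (ε : ℝ) : Prop :=
  ∃ r : RandomReduction t s, mean t.law r.failure ≤ ε

lemma HasCode.of_reduces [Fintype B₁] [Fintype B₂] {W : I₁ × I₂ → O₁ × O₂ → ℝ} (hW : IsKernel W)
    {t₁ : Source B₁ T₁} {t₂ : Source B₂ T₂} {s₁ : Source A₁ S₁} {s₂ : Source A₂ S₂}
    (h₁ : IsPMF t₁.law) (h₂ : IsPMF t₂.law) {ε ε₁ ε₂ : ℝ} (hcode : HasCode W s₁ s₂ ε)
    (hr₁ : t₁.Reduces s₁ ε₁) (hr₂ : t₂.Reduces s₂ ε₂) : HasCode W t₁ t₂ (ε + ε₁ + ε₂) := by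
  obtain ⟨f₁, f₂, g₁, g₂, hε⟩ := hcode
  obtain ⟨r₁, hr₁⟩ := hr₁
  obtain ⟨r₂, hr₂⟩ := hr₂
  let F₁ (ν : r₁.Seed × r₂.Seed) := f₁ ∘ r₁.enc ν.1
  let F₂ (ν : r₁.Seed × r₂.Seed) := f₂ ∘ r₂.enc ν.2
  let G₁ (ν : r₁.Seed × r₂.Seed) (y : O₁) (v : T₂) := r₁.dec ν.1 (g₁ y (r₂.side ν.2 v))
  let G₂ (ν : r₁.Seed × r₂.Seed) (y : O₂) (v : T₁) := r₂.dec ν.2 (g₂ y (r₁.side ν.1 v))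
  let L := joint r₁.seedLaw fun _ => r₂.seedLaw
  have hL : IsPMF L := r₁.isPMF_seedLaw.joint fun _ => r₂.isPMF_seedLaw
  have havg (b₁ : B₁) (b₂ : B₂) :
      (mean L fun ν => condErrProb W t₁ t₂ (F₁ ν) (F₂ ν) (G₁ ν) (G₂ ν) b₁ b₂) ≤
        errProb W s₁ s₂ f₁ f₂ g₁ g₂ + r₁.failure b₁ + r₂.failure b₂ := by
    refine (mean_mono hL.1 fun ν =>
      condErrProb_comp_le hW r₁ r₂ f₁ f₂ g₁ g₂ ν.1 ν.2 b₁ b₂).trans_eq ?_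
    simp only [L, mean_add, mean_joint, mean_const r₁.isPMF_seedLaw, mean_const r₂.isPMF_seedLaw,
      errProb, ← r₁.pr_enc b₁, ← r₂.pr_enc b₂, mean_pr]
    rfl
  obtain ⟨ν, hν⟩ := hL.exists_le_mean fun ν => errProb W t₁ t₂ (F₁ ν) (F₂ ν) (G₁ ν) (G₂ ν)
  refine ⟨F₁ ν, F₂ ν, G₁ ν, G₂ ν, hν.trans ?_⟩
  calc (mean L fun ν => errProb W t₁ t₂ (F₁ ν) (F₂ ν) (G₁ ν) (G₂ ν))
      = mean t₁.law fun b₁ => mean t₂.law fun b₂ =>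
          mean L fun ν => condErrProb W t₁ t₂ (F₁ ν) (F₂ ν) (G₁ ν) (G₂ ν) b₁ b₂ :=
        (mean_rotate t₁.law t₂.law L _).symm
    _ ≤ mean t₁.law fun b₁ => mean t₂.law fun b₂ =>
          errProb W s₁ s₂ f₁ f₂ g₁ g₂ + r₁.failure b₁ + r₂.failure b₂ :=
        mean_mono h₁.1 fun b₁ => mean_mono h₂.1 (havg b₁)
    _ = errProb W s₁ s₂ f₁ f₂ g₁ g₂ + mean t₁.law r₁.failure + mean t₂.law r₂.failure := by
        simp only [mean_add, mean_const h₁, mean_const h₂]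
    _ ≤ ε + ε₁ + ε₂ := by gcongr

end Codes

section BlockCodes

variable {I₁ I₂ O₁ O₂ : Type}

/-- The uniform law on a finite type. -/
noncomputable def uniform (α : Type*) [Fintype α] : α → ℝ :=
  fun _ => 1 / Fintype.card α

/-- A uniformly distributed message, made of a common part revealed to both receivers and of a
private part; `M` and `M'` are the numbers of values of these parts. -/
noncomputable def msgSource (M M' : ℕ) : Source (Fin M × Fin M') (Fin M) :=
  ⟨uniform _, Prod.fst⟩

/-- `n` independent samples of `p`, of which the unintended receiver observes the images
under `h`. -/
def blockSource {U V : Type} (p : U → ℝ) (h : U → V) (n : ℕ) : Source (Fin n → U) (Fin n → V) :=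
  ⟨iid p n, (h ∘ ·)⟩

/-- The `n`-th power of a memoryless interference channel. -/
def blockChannel (ch : I₁ × I₂ → O₁ × O₂ → ℝ) (n : ℕ) :
    (Fin n → I₁) × (Fin n → I₂) → (Fin n → O₁) × (Fin n → O₂) → ℝ :=
  fun x y => ∏ i, ch (x.1 i, x.2 i) (y.1 i, y.2 i)

lemma isPMF_uniform (α : Type*) [Fintype α] [Nonempty α] : IsPMF (uniform α) :=
  ⟨fun _ => by unfold uniform; positivity, by simp [uniform]⟩

lemma pr_uniform_equiv {α β : Type*} [Fintype α] [Fintype β] (e : α ≃ β) :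
    pr (uniform α) e = uniform β := by
  ext b
  have hb (a : α) : e a = b ↔ a = e.symm b := e.eq_symm_apply.symm
  simp [pr, uniform, hb, Fintype.card_congr e]

lemma isPMF_law_msgSource {M M' : ℕ} [NeZero M] [NeZero M'] : IsPMF (msgSource M M').law :=
  isPMF_uniform _

lemma isPMF_law_blockSource {U V : Type} [Fintype U] {p : U → ℝ} (hp : IsPMF p) (h : U → V)
    (n : ℕ) : IsPMF (blockSource p h n).law :=
  hp.iid n

variable [Fintype O₁] [Fintype O₂]

lemma mean_blockChannel (ch : I₁ × I₂ → O₁ × O₂ → ℝ) (n : ℕ) (x : (Fin n → I₁) × (Fin n → I₂))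
    (f : (Fin n → O₁) × (Fin n → O₂) → ℝ) :
    mean (blockChannel ch n x) f = mean (piLaw fun i => ch (x.1 i, x.2 i))
      fun y => f (fun i => (y i).1, fun i => (y i).2) :=
  (Fintype.sum_equiv (Equiv.arrowProdEquivProdArrow (Fin n) (fun _ => O₁) fun _ => O₂) _ _
    fun _ => rfl).symm

lemma isKernel_blockChannel {ch : I₁ × I₂ → O₁ × O₂ → ℝ} (hch : IsKernel ch) (n : ℕ) :
    IsKernel (blockChannel ch n) := by
  intro x
  refine ⟨fun y => Finset.prod_nonneg fun i _ => (hch _).1 _, ?_⟩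
  have hmean := mean_blockChannel ch n x fun _ => 1
  rw [mean_const (IsPMF.piLaw fun i => hch _)] at hmean
  simpa [mean] using hmean

lemma PerrMsg_eq_errProb (ch : I₁ × I₂ → O₁ × O₂ → ℝ)
    (n M₁ M₁' M₂ M₂' : ℕ)
    (f₁ : Fin M₁ × Fin M₁' → Fin n → I₁) (f₂ : Fin M₂ × Fin M₂' → Fin n → I₂)
    (g₁ : (Fin n → O₁) → Fin M₂ → Fin M₁ × Fin M₁')
    (g₂ : (Fin n → O₂) → Fin M₁ → Fin M₂ × Fin M₂') :
    PerrMsg ch n M₁ M₁' M₂ M₂' f₁ f₂ g₁ g₂ =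
      errProb (blockChannel ch n) (msgSource M₁ M₁') (msgSource M₂ M₂') f₁ f₂ g₁ g₂ := by
  simp only [PerrMsg, errProb, condErrProb, prob, mean_blockChannel]
  simp only [mean, piLaw, msgSource, uniform, Set.indicator_apply, Set.mem_ofPred_eq, Pi.one_apply,
    ite_not, Finset.mul_sum, Fintype.card_prod, Fintype.card_fin, Nat.cast_mul]
  refine Finset.sum_congr rfl fun w₁ _ => Finset.sum_congr rfl fun w₂ _ =>
    Finset.sum_congr rfl fun y _ => ?_
  ring

lemma PerrDet_eq_errProb {U₁ V₁ U₂ V₂ : Type} [Fintype U₁] [Fintype U₂]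
    (ch : I₁ × I₂ → O₁ × O₂ → ℝ) (p₁ : U₁ → ℝ) (h₁ : U₁ → V₁) (p₂ : U₂ → ℝ)
    (h₂ : U₂ → V₂) (n : ℕ) (f₁ : (Fin n → U₁) → Fin n → I₁) (f₂ : (Fin n → U₂) → Fin n → I₂)
    (g₁ : (Fin n → O₁) → (Fin n → V₂) → Fin n → U₁)
    (g₂ : (Fin n → O₂) → (Fin n → V₁) → Fin n → U₂) :
    PerrDet ch p₁ h₁ p₂ h₂ n f₁ f₂ g₁ g₂ =
      errProb (blockChannel ch n) (blockSource p₁ h₁ n) (blockSource p₂ h₂ n) f₁ f₂ g₁ g₂ := by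
  simp only [PerrDet, errProb, condErrProb, prob, mean_blockChannel]
  simp only [mean, piLaw, blockSource, Set.indicator_apply, Set.mem_ofPred_eq, Pi.one_apply,
    ite_not, Finset.mul_sum, mul_assoc]
  rfl

end BlockCodes

section Superposition

lemma prob_eval_eq_eval_le {γ : Type*} [Fintype γ] {q : γ → ℝ} (hq : IsPMF q) {β : ℝ}
    (hβ : 0 ≤ β) {M : ℕ} {j k : Fin M} (hjk : j ≠ k) :
    prob (iid q M) {φ | φ k = φ j ∧ q (φ j) ≤ β} ≤ β := by
  calc prob (iid q M) {φ | φ k = φ j ∧ q (φ j) ≤ β}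
      = prob (joint q fun _ => q) {x | x.2 = x.1 ∧ q x.1 ≤ β} := by
        have := prob_pr (iid q M) (fun φ => (φ j, φ k)) {x | x.2 = x.1 ∧ q x.1 ≤ β}
        rwa [pr_eval_pair_piLaw (fun _ => hq) hjk, eq_comm] at this
    _ ≤ β := by
        rw [prob_joint]
        refine mean_le_of_forall_le hq fun c => ?_
        by_cases hc : q c ≤ β
        · simp [hc, prob_singleton]
        · simpa [hc, prob_empty] using hβ

lemma prob_exists_eq_le {γ : Type*} [Fintype γ] {q : γ → ℝ} (hq : IsPMF q) {β : ℝ} (hβ : 0 ≤ β)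
    {M : ℕ} (j : Fin M) :
    prob (iid q M) {φ | ∃ k ≠ j, φ k = φ j} ≤ prob q {c | β < q c} + (M - 1) * β := by
  have hlikely : prob (iid q M) {φ | β < q (φ j)} = prob q {c | β < q c} := by
    have := prob_pr (iid q M) (fun φ => φ j) {c | β < q c}
    rwa [pr_eval_piLaw fun _ => hq, eq_comm] at this
  have hsub : {φ : Fin M → γ | ∃ k ≠ j, φ k = φ j} ⊆
      {φ | β < q (φ j)} ∪ ⋃ k ∈ Finset.univ.erase j, {φ | φ k = φ j ∧ q (φ j) ≤ β} := by
    rintro φ ⟨k, hk, hφ⟩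
    rcases lt_or_ge β (q (φ j)) with hβφ | hβφ
    · exact Or.inl hβφ
    · exact Or.inr (Set.mem_biUnion (Finset.mem_erase.mpr ⟨hk, Finset.mem_univ k⟩) ⟨hφ, hβφ⟩)
  have hnonneg := (hq.iid M).1
  calc prob (iid q M) {φ | ∃ k ≠ j, φ k = φ j}
      ≤ prob (iid q M) {φ | β < q (φ j)} + ∑ k ∈ Finset.univ.erase j,
          prob (iid q M) {φ | φ k = φ j ∧ q (φ j) ≤ β} :=
        (prob_mono hnonneg fun φ _ h => hsub h).trans <| (prob_union_le hnonneg _ _).trans <|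
          by gcongr; exact prob_biUnion_le hnonneg _ _
    _ ≤ prob q {c | β < q c} + ∑ _k ∈ Finset.univ.erase j, β := by
        rw [hlikely]
        gcongr with k hk
        exact prob_eval_eq_eval_le hq hβ (Finset.ne_of_mem_erase hk).symm
    _ = prob q {c | β < q c} + (M - 1) * β := by
        rw [Finset.sum_const, Finset.card_erase_of_mem (Finset.mem_univ j), Finset.card_univ,
          Fintype.card_fin, nsmul_eq_mul, Nat.cast_pred j.pos]

variable {M M' : ℕ} {A S : Type}

/-- The centre and the satellite that the superposition code `ν` assigns to the message `w`. -/
def codeword (ν : Fin M → S × (Fin M' → A)) (w : Fin M × Fin M') : S × A :=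
  ((ν w.1).1, (ν w.1).2 w.2)

lemma eq_of_codeword_eq {ν : Fin M → S × (Fin M' → A)} {w : Fin M × Fin M'}
    (hcentre : ¬∃ k ≠ w.1, (ν k).1 = (ν w.1).1)
    (hsatellite : ¬∃ k ≠ w.2, (ν w.1).2 k = (ν w.1).2 w.2) {w' : Fin M × Fin M'}
    (h : codeword ν w' = codeword ν w) : w' = w := by
  have h₁ : (ν w'.1).1 = (ν w.1).1 := (Prod.ext_iff.mp h).1
  have hw₁ : w'.1 = w.1 := by_contra fun hne => hcentre ⟨_, hne, h₁⟩
  have h₂ : (ν w'.1).2 w'.2 = (ν w.1).2 w.2 := (Prod.ext_iff.mp h).2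
  rw [hw₁] at h₂
  exact Prod.ext hw₁ (by_contra fun hne => hsatellite ⟨_, hne, h₂⟩)

variable [Fintype A] {s : Source A S}

/-- The law of a cloud of a random superposition code for the source `s`: the centre is side
information on `s`, and the `M'` satellites are outputs of `s`, drawn independently given the
centre. -/
noncomputable def cloudLaw (s : Source A S) (M' : ℕ) : S × (Fin M' → A) → ℝ :=
  joint (pr s.law s.side) fun v => iid (condLaw s.law s.side v) M'

lemma side_codeword_snd (w : Fin M × Fin M') {ν : Fin M → S × (Fin M' → A)}
    (hν : iid (cloudLaw s M') M ν ≠ 0) : s.side (codeword ν w).2 = (codeword ν w).1 := by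
  obtain ⟨hcentre, hsatellites⟩ := mul_ne_zero_iff.mp (ne_zero_of_piLaw_ne_zero hν w.1)
  exact eq_of_condLaw_ne_zero hcentre (ne_zero_of_piLaw_ne_zero hsatellites w.2)

variable [Fintype S]

lemma isPMF_cloudLaw (hs : IsPMF s.law) (M' : ℕ) : IsPMF (cloudLaw s M') :=
  (hs.pr _).joint fun v => (isKernel_condLaw hs s.side v).iid M'

lemma pr_codeword (hs : IsPMF s.law) (w : Fin M × Fin M') :
    pr (iid (cloudLaw s M') M) (fun ν => codeword ν w) = pr s.law fun a => (s.side a, a) := by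
  calc pr (iid (cloudLaw s M') M) (fun ν => codeword ν w)
      = pr (pr (iid (cloudLaw s M') M) fun ν => ν w.1) (fun x => (x.1, x.2 w.2)) :=
        (pr_pr (iid (cloudLaw s M') M) (fun ν => ν w.1) fun x => (x.1, x.2 w.2)).symm
    _ = joint (pr s.law s.side) (condLaw s.law s.side) := by
        rw [pr_eval_piLaw fun _ => isPMF_cloudLaw hs M', cloudLaw,
          pr_joint_map_right _ _ fun φ : Fin M' → A => φ w.2]
        simp only [pr_eval_piLaw fun _ => isKernel_condLaw hs s.side _]
    _ = pr s.law fun a => (s.side a, a) := joint_pr_condLaw hs.1 s.side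

lemma pr_codeword_snd (hs : IsPMF s.law) (w : Fin M × Fin M') :
    pr (iid (cloudLaw s M') M) (fun ν => (codeword ν w).2) = s.law := by
  have := pr_pr (iid (cloudLaw s M') M) (fun ν => codeword ν w) Prod.snd
  rw [pr_codeword hs, pr_pr] at this
  exact this.symm.trans (pr_id _)

lemma prob_centre_collision_le (hs : IsPMF s.law) {β : ℝ} (hβ : 0 ≤ β) (j : Fin M) :
    prob (iid (cloudLaw s M') M) {ν | ∃ k ≠ j, (ν k).1 = (ν j).1} ≤
      prob s.law {a | β < pr s.law s.side (s.side a)} + (M - 1) * β := by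
  calc prob (iid (cloudLaw s M') M) {ν | ∃ k ≠ j, (ν k).1 = (ν j).1}
      = prob (iid (pr s.law s.side) M) {φ | ∃ k ≠ j, φ k = φ j} := by
        have := prob_pr (iid (cloudLaw s M') M) (fun ν => Prod.fst ∘ ν) {φ | ∃ k ≠ j, φ k = φ j}
        rw [pr_comp_piLaw, cloudLaw,
          pr_fst_joint _ fun v => (isKernel_condLaw hs s.side v).iid M'] at this
        exact this.symm
    _ ≤ prob (pr s.law s.side) {v | β < pr s.law s.side v} + (M - 1) * β :=
        prob_exists_eq_le (hs.pr _) hβ j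
    _ = _ := by rw [prob_pr]; rfl

lemma prob_satellite_collision_le (hs : IsPMF s.law) {β : ℝ} (hβ : 0 ≤ β) (i : Fin M)
    (j : Fin M') :
    prob (iid (cloudLaw s M') M) {ν | ∃ k ≠ j, (ν i).2 k = (ν i).2 j} ≤
      prob s.law {a | β < condLaw s.law s.side (s.side a) a} + (M' - 1) * β := by
  calc prob (iid (cloudLaw s M') M) {ν | ∃ k ≠ j, (ν i).2 k = (ν i).2 j}
      = prob (cloudLaw s M') {x | ∃ k ≠ j, x.2 k = x.2 j} := by
        have := prob_pr (iid (cloudLaw s M') M) (fun ν => ν i) {x | ∃ k ≠ j, x.2 k = x.2 j}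
        rw [pr_eval_piLaw fun _ => isPMF_cloudLaw hs M'] at this
        exact this.symm
    _ = mean (pr s.law s.side) fun v =>
          prob (iid (condLaw s.law s.side v) M') {φ | ∃ k ≠ j, φ k = φ j} :=
        prob_joint _ _ _
    _ ≤ mean (pr s.law s.side) fun v =>
          prob (condLaw s.law s.side v) {a | β < condLaw s.law s.side v a} + (M' - 1) * β :=
        mean_mono (hs.pr _).1 fun v => prob_exists_eq_le (isKernel_condLaw hs s.side v) hβ j
    _ = prob (joint (pr s.law s.side) (condLaw s.law s.side))
          {x | β < condLaw s.law s.side x.1 x.2} + (M' - 1) * β := by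
        rw [mean_add, mean_const (hs.pr _), prob_joint]
        rfl
    _ = _ := by rw [joint_pr_condLaw hs.1, prob_pr]; rfl

/-- Sending messages by a random superposition code whose codewords are outputs of `s`. -/
noncomputable def superpositionReduction (hs : IsPMF s.law) (M M' : ℕ) [NeZero M] [NeZero M'] :
    RandomReduction (msgSource M M') s where
  Seed := Fin M → S × (Fin M' → A)
  seedLaw := iid (cloudLaw s M') M
  isPMF_seedLaw := (isPMF_cloudLaw hs M').iid M
  enc ν w := (codeword ν w).2
  side ν k := (ν k).1
  dec ν a := Function.invFun (codeword ν) (s.side a, a)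
  pr_enc := pr_codeword_snd hs

lemma superpositionReduction_correct (hs : IsPMF s.law) [NeZero M] [NeZero M']
    {ν : Fin M → S × (Fin M' → A)} (hν : iid (cloudLaw s M') M ν ≠ 0) {w : Fin M × Fin M'}
    (hcentre : ¬∃ k ≠ w.1, (ν k).1 = (ν w.1).1)
    (hsatellite : ¬∃ k ≠ w.2, (ν w.1).2 k = (ν w.1).2 w.2) :
    (superpositionReduction hs M M').Correct ν w := by
  have hside := side_codeword_snd w hν
  have hcodeword : (s.side (codeword ν w).2, (codeword ν w).2) = codeword ν w :=
    Prod.ext hside rfl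
  refine ⟨eq_of_codeword_eq hcentre hsatellite ?_, hside.symm⟩
  simp only [superpositionReduction, hcodeword]
  exact Function.invFun_eq ⟨w, rfl⟩

lemma superpositionReduction_failure_le (hs : IsPMF s.law) [NeZero M] [NeZero M'] {β β' : ℝ}
    (hβ : 0 ≤ β) (hβ' : 0 ≤ β') (w : Fin M × Fin M') :
    (superpositionReduction hs M M').failure w ≤
      (prob s.law {a | β < pr s.law s.side (s.side a)} + (M - 1) * β) +
        (prob s.law {a | β' < condLaw s.law s.side (s.side a) a} + (M' - 1) * β') := by
  have hnonneg := ((isPMF_cloudLaw hs M').iid M).1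
  refine le_trans ?_ (add_le_add (prob_centre_collision_le (M' := M') hs hβ w.1)
    (prob_satellite_collision_le hs hβ' w.1 w.2))
  refine (prob_mono hnonneg fun ν hν hfail => ?_).trans (prob_union_le hnonneg _ _)
  by_contra hnot
  rw [Set.mem_union, not_or] at hnot
  exact hfail (superpositionReduction_correct hs hν hnot.1 hnot.2)

omit [Fintype S] in
lemma msgSource_reduces [Finite S] (hs : IsPMF s.law) (M M' : ℕ) [NeZero M] [NeZero M']
    {β β' : ℝ} (hβ : 0 ≤ β) (hβ' : 0 ≤ β') :
    (msgSource M M').Reduces s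
      ((prob s.law {a | β < pr s.law s.side (s.side a)} + (M - 1) * β) +
        (prob s.law {a | β' < condLaw s.law s.side (s.side a) a} + (M' - 1) * β')) := by
  have := Fintype.ofFinite S
  exact ⟨superpositionReduction hs M M', mean_le_of_forall_le isPMF_law_msgSource
    (superpositionReduction_failure_le hs hβ hβ')⟩

end Superposition

section Indexing

lemma exists_injOn_of_le {α : Type*} [Fintype α] {q : α → ℝ} (hq : IsPMF q) {β : ℝ} (hβ : 0 < β)
    {M : ℕ} (hM : 1 ≤ M * β) : ∃ f : α → Fin M, Set.InjOn f {a | β ≤ q a} := by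
  set s := Finset.univ.filter fun a => β ≤ q a
  have hcard : s.card ≤ M := by
    have hle : s.card * β ≤ M * β := by
      calc s.card * β = ∑ _a ∈ s, β := by rw [Finset.sum_const, nsmul_eq_mul]
        _ ≤ ∑ a ∈ s, q a := Finset.sum_le_sum fun a ha => (Finset.mem_filter.mp ha).2
        _ ≤ ∑ a, q a := Finset.sum_le_univ_sum_of_nonneg hq.1
        _ ≤ M * β := hq.2.trans_le hM
    exact_mod_cast le_of_mul_le_mul_right hle hβ
  have : Nonempty (Fin M) := by
    rw [← Fin.pos_iff_nonempty, Nat.pos_iff_ne_zero]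
    rintro rfl
    norm_num at hM
  obtain ⟨f, -, hf⟩ := s.finite_toSet.exists_injOn_of_encard_le (t := (Set.univ : Set (Fin M)))
    (by simpa using hcard)
  exact ⟨f, by simpa [s] using hf⟩

variable {A S : Type} {M M' : ℕ} {s : Source A S}

/-- Sending the outputs of `s` that lie in `D` as messages, by the index `(f (s.side a), f' a)`
shifted by a uniform seed, which makes the message uniform. -/
noncomputable def shiftReduction [Nonempty A] (s : Source A S) [NeZero M] [NeZero M']
    (f : S → Fin M) (f' : A → Fin M') (D : Set A) : RandomReduction s (msgSource M M') where
  Seed := Fin M × Fin M'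
  seedLaw := uniform _
  isPMF_seedLaw := isPMF_uniform _
  enc ν a := (f (s.side a), f' a) + ν
  side ν v := f v + ν.1
  dec ν w := Function.invFunOn (fun a => (f (s.side a), f' a)) D (w - ν)
  pr_enc a := pr_uniform_equiv (Equiv.addLeft (f (s.side a), f' a))

lemma shiftReduction_correct [Nonempty A] [NeZero M] [NeZero M'] {f : S → Fin M}
    {f' : A → Fin M'} {D : Set A} (hD : Set.InjOn (fun a => (f (s.side a), f' a)) D)
    (ν : Fin M × Fin M') {a : A} (ha : a ∈ D) : (shiftReduction s f f' D).Correct ν a := by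
  refine ⟨?_, rfl⟩
  simp only [shiftReduction, add_sub_cancel_right]
  exact hD.leftInvOn_invFunOn ha

variable [Fintype A]

/-- The outputs of `s` whose side information has probability at least `β`, and whose conditional
probability given the side information is at least `β'`. -/
def likely (s : Source A S) (β β' : ℝ) : Set A :=
  {a | β ≤ pr s.law s.side (s.side a) ∧ β' ≤ condLaw s.law s.side (s.side a) a}

lemma exists_injOn_likely [Finite S] (hs : IsPMF s.law) {β β' : ℝ} (hβ : 0 < β) (hβ' : 0 < β')
    (hM : 1 ≤ M * β) (hM' : 1 ≤ M' * β') :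
    ∃ (f : S → Fin M) (f' : A → Fin M'),
      Set.InjOn (fun a => (f (s.side a), f' a)) (likely s β β') := by
  have := Fintype.ofFinite S
  obtain ⟨f, hf⟩ := exists_injOn_of_le (hs.pr s.side) hβ hM
  choose g hg using fun v => exists_injOn_of_le (isKernel_condLaw hs s.side v) hβ' hM'
  refine ⟨f, fun a => g (s.side a) a, fun a ha b hb hab => ?_⟩
  obtain ⟨hside, hindex⟩ := Prod.ext_iff.mp hab
  have hside : s.side a = s.side b := hf ha.1 hb.1 hside
  have hindex : g (s.side a) a = g (s.side b) b := hindex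
  rw [← hside] at hindex
  exact hg (s.side a) ha.2 (show β' ≤ condLaw s.law s.side (s.side a) b from hside ▸ hb.2) hindex

lemma prob_compl_likely_le (hs : ∀ a, 0 ≤ s.law a) (β β' : ℝ) :
    prob s.law (likely s β β')ᶜ ≤ prob s.law {a | pr s.law s.side (s.side a) < β} +
      prob s.law {a | condLaw s.law s.side (s.side a) a < β'} := by
  refine (prob_mono hs fun a _ ha => ?_).trans (prob_union_le hs _ _)
  by_contra h
  simp only [Set.mem_union, Set.mem_ofPred_eq, not_or, not_lt] at h
  exact ha h

lemma reduces_msgSource [Finite S] (hs : IsPMF s.law) {β β' : ℝ} (hβ : 0 < β) (hβ' : 0 < β')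
    (hM : 1 ≤ M * β) (hM' : 1 ≤ M' * β') :
    s.Reduces (msgSource M M') (prob s.law {a | pr s.law s.side (s.side a) < β} +
      prob s.law {a | condLaw s.law s.side (s.side a) a < β'}) := by
  have := hs.nonempty
  have : NeZero M := ⟨by rintro rfl; norm_num at hM⟩
  have : NeZero M' := ⟨by rintro rfl; norm_num at hM'⟩
  obtain ⟨f, f', hinj⟩ := exists_injOn_likely hs hβ hβ' hM hM'
  refine ⟨shiftReduction s f f' (likely s β β'), le_trans ?_ (prob_compl_likely_le hs.1 β β')⟩
  exact RandomReduction.mean_failure_le _ hs.1 fun a ha ν => shiftReduction_correct hinj ν ha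

end Indexing

section Asymptotics

variable {U V : Type} [Fintype U] {p : U → ℝ}

lemma pr_comp_iid (p : U → ℝ) (h : U → V) (n : ℕ) (u : Fin n → U) :
    pr (iid p n) (h ∘ ·) (h ∘ u) = ∏ i, pr p h (h (u i)) := by
  rw [pr_comp_piLaw]
  rfl

/-- The least number of messages of rate at least `R` in blocks of length `n`. -/
noncomputable def msgSize (R : ℝ) (n : ℕ) : ℕ :=
  ⌈(2 : ℝ) ^ (n * R)⌉₊

instance (R : ℝ) (n : ℕ) : NeZero (msgSize R n) :=
  ⟨(Nat.ceil_pos.mpr (by positivity)).ne'⟩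

lemma le_logb_msgSize_div (R : ℝ) {n : ℕ} (hn : 0 < n) : R ≤ logb 2 (msgSize R n) / n := by
  rw [le_div_iff₀ (by exact_mod_cast hn), mul_comm,
    le_logb_iff_rpow_le one_lt_two (by exact_mod_cast Nat.pos_of_neZero _)]
  exact Nat.le_ceil _

lemma one_le_mul_rpow {R : ℝ} (hR : 0 < R) {n M : ℕ} (hn : 0 < n) (h : R ≤ logb 2 M / n) :
    1 ≤ M * (2 : ℝ) ^ (-(n * R)) := by
  have hM : (0 : ℝ) < M := by
    rcases M.eq_zero_or_pos with rfl | hM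
    · simp only [Nat.cast_zero, logb_zero, zero_div] at h
      linarith
    · exact_mod_cast hM
  rw [le_div_iff₀ (by exact_mod_cast hn), mul_comm, le_logb_iff_rpow_le one_lt_two hM] at h
  rw [rpow_neg zero_le_two, ← div_eq_mul_inv]
  exact (one_le_div (by positivity)).mpr h

lemma exists_tendsto_prob_lt_prod_add (hp : IsPMF p) {r : U → ℝ} (hr : ∀ a, p a ≠ 0 → 0 < r a)
    {R : ℝ} (hR : R < mean p fun a => -logb 2 (r a)) :
    ∃ β : ℕ → ℝ, (∀ n, 0 ≤ β n) ∧
      Tendsto (fun n => prob (iid p n) {u | β n < ∏ i, r (u i)} + (msgSize R n - 1) * β n)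
        atTop (nhds 0) := by
  obtain ⟨c, hRc, hc⟩ := exists_between hR
  refine ⟨fun n => (2 : ℝ) ^ (-(n * c)), fun n => by positivity, ?_⟩
  have hsize (n : ℕ) : (msgSize R n - 1) * (2 : ℝ) ^ (-(n * c)) ≤ ((2 : ℝ) ^ (R - c)) ^ n := by
    have hceil : (msgSize R n : ℝ) < 2 ^ (n * R) + 1 := Nat.ceil_lt_add_one (by positivity)
    calc (msgSize R n - 1) * (2 : ℝ) ^ (-(n * c)) ≤ (2 : ℝ) ^ (n * R) * (2 : ℝ) ^ (-(n * c)) := by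
          gcongr
          linarith
      _ = ((2 : ℝ) ^ (R - c)) ^ n := by
          rw [← rpow_add two_pos, ← rpow_natCast, ← rpow_mul zero_le_two]
          ring_nf
  have hpow : Tendsto (fun n : ℕ => ((2 : ℝ) ^ (R - c)) ^ n) atTop (nhds 0) :=
    tendsto_pow_atTop_nhds_zero_of_lt_one (by positivity)
      (rpow_lt_one_of_one_lt_of_neg one_lt_two (sub_neg.mpr hRc))
  have hone (n : ℕ) : (1 : ℝ) ≤ msgSize R n := by exact_mod_cast Nat.pos_of_neZero _
  simpa using (tendsto_prob_lt_prod hp hr hc).add <|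
    squeeze_zero (fun n => mul_nonneg (sub_nonneg.mpr (hone n)) (by positivity)) hsize hpow

lemma prob_condLaw_block {p : U → ℝ} (hp : IsPMF p) (h : U → V) (n : ℕ) (D : Set ℝ) :
    prob (iid p n) {u | condLaw (iid p n) (h ∘ ·) (h ∘ u) u ∈ D} =
      prob (iid p n) {u | ∏ i, condLaw p h (h (u i)) (u i) ∈ D} := by
  refine le_antisymm (prob_mono (hp.iid n).1 fun u hu => ?_)
    (prob_mono (hp.iid n).1 fun u hu => ?_) <;>
  simp only [Set.mem_ofPred_eq, condLaw_iid hp h hu, imp_self]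

lemma exists_tendsto_msgSource_reduces [Fintype V] (hp : IsPMF p) (h : U → V) {R R' : ℝ}
    (hR : R < ent p h) (hR' : R' < condEnt p id h) :
    ∃ ε : ℕ → ℝ, Tendsto ε atTop (nhds 0) ∧
      ∀ n, (msgSource (msgSize R n) (msgSize R' n)).Reduces (blockSource p h n) (ε n) := by
  rw [ent_eq_mean] at hR
  rw [condEnt_id_eq_mean hp] at hR'
  obtain ⟨β, hβ, hlim⟩ := exists_tendsto_prob_lt_prod_add hp (fun _ => pr_self_pos hp.1 h) hR
  obtain ⟨β', hβ', hlim'⟩ :=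
    exists_tendsto_prob_lt_prod_add hp (fun _ => condLaw_self_pos hp.1 h) hR'
  refine ⟨_, add_zero (0 : ℝ) ▸ hlim.add hlim', fun n => ?_⟩
  have hred := msgSource_reduces (isPMF_law_blockSource hp h n) (msgSize R n) (msgSize R' n)
    (hβ n) (hβ' n)
  have hcond := prob_condLaw_block hp h n (Set.Ioi (β' n))
  simp only [Set.mem_Ioi] at hcond
  simpa only [blockSource, pr_comp_iid, hcond] using hred

lemma exists_tendsto_reduces_msgSource [Fintype V] (hp : IsPMF p) (h : U → V) {R R' : ℝ}
    (hR : ent p h < R) (hR' : condEnt p id h < R') {M M' : ℕ → ℕ}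
    (hM : ∀ n : ℕ, 0 < n → R ≤ logb 2 (M n) / n) (hM' : ∀ n : ℕ, 0 < n → R' ≤ logb 2 (M' n) / n) :
    ∃ ε : ℕ → ℝ, Tendsto ε atTop (nhds 0) ∧
      ∀ n, 0 < n → (blockSource p h n).Reduces (msgSource (M n) (M' n)) (ε n) := by
  have hRpos : 0 < R := (ent_nonneg hp h).trans_lt hR
  have hRpos' : 0 < R' := (condEnt_id_nonneg hp h).trans_lt hR'
  rw [ent_eq_mean] at hR
  rw [condEnt_id_eq_mean hp] at hR'
  have hlim := tendsto_prob_prod_lt hp (fun _ => pr_self_pos hp.1 h) hR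
  have hlim' := tendsto_prob_prod_lt hp (fun _ => condLaw_self_pos hp.1 h) hR'
  refine ⟨_, add_zero (0 : ℝ) ▸ hlim.add hlim', fun n hn => ?_⟩
  have hred := reduces_msgSource (isPMF_law_blockSource hp h n) (by positivity) (by positivity)
    (one_le_mul_rpow hRpos hn (hM n hn)) (one_le_mul_rpow hRpos' hn (hM' n hn))
  have hcond := prob_condLaw_block hp h n (Set.Iio (2 ^ (-(n * R'))))
  simp only [Set.mem_Iio] at hcond
  simpa only [blockSource, pr_comp_iid, hcond] using hred

end Asymptotics

section CapacityRegion

open Topology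

variable {U₁ V₁ U₂ V₂ I₁ I₂ O₁ O₂ : Type} [Fintype U₁] [Fintype U₂] [Fintype O₁] [Fintype O₂]
  {ch : I₁ × I₂ → O₁ × O₂ → ℝ} {p₁ : U₁ → ℝ} {h₁ : U₁ → V₁} {p₂ : U₂ → ℝ} {h₂ : U₂ → V₂}
  {R : ℝ × ℝ × ℝ × ℝ}

lemma achMsg_of_hasCode (hch : IsKernel ch) {M₁ M₁' M₂ M₂' : ℕ → ℕ}
    [∀ n, NeZero (M₁ n)] [∀ n, NeZero (M₁' n)] [∀ n, NeZero (M₂ n)] [∀ n, NeZero (M₂' n)]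
    (hrate : ∀ n : ℕ, 0 < n →
      R.1 ≤ logb 2 (M₁ n) / n ∧ R.2.1 ≤ logb 2 (M₁' n) / n ∧
      R.2.2.1 ≤ logb 2 (M₂ n) / n ∧ R.2.2.2 ≤ logb 2 (M₂' n) / n)
    {ε : ℕ → ℝ} (hε : Tendsto ε atTop (𝓝 0))
    (hcode : ∀ n, HasCode (blockChannel ch n) (msgSource (M₁ n) (M₁' n))
      (msgSource (M₂ n) (M₂' n)) (ε n)) : AchMsg ch R := by
  choose f₁ f₂ g₁ g₂ hle using hcode
  refine ⟨M₁, M₁', M₂, M₂', f₁, f₂, g₁, g₂, hrate, ?_⟩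
  simp only [PerrMsg_eq_errProb]
  exact squeeze_zero (fun n => errProb_nonneg (isKernel_blockChannel hch n) isPMF_law_msgSource
    isPMF_law_msgSource _ _ _ _) hle hε

lemma reliableDet_of_hasCode (hch : IsKernel ch) (hp₁ : IsPMF p₁) (hp₂ : IsPMF p₂)
    {ε : ℕ → ℝ} (hε : Tendsto ε atTop (𝓝 0))
    (hcode : ∀ n, 0 < n →
      HasCode (blockChannel ch n) (blockSource p₁ h₁ n) (blockSource p₂ h₂ n) (ε n)) :
    ReliableDet ch p₁ h₁ p₂ h₂ := by
  have hexists (n : ℕ) : ∃ f₁ f₂ g₁ g₂, 0 < n →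
      errProb (blockChannel ch n) (blockSource p₁ h₁ n) (blockSource p₂ h₂ n) f₁ f₂ g₁ g₂ ≤
        ε n := by
    rcases n.eq_zero_or_pos with rfl | hn
    · exact ⟨fun _ => Fin.elim0, fun _ => Fin.elim0, fun _ _ => Fin.elim0,
        fun _ _ => Fin.elim0, fun hn => absurd hn (lt_irrefl 0)⟩
    · obtain ⟨f₁, f₂, g₁, g₂, hle⟩ := hcode n hn
      exact ⟨f₁, f₂, g₁, g₂, fun _ => hle⟩
  choose f₁ f₂ g₁ g₂ hle using hexists
  refine ⟨f₁, f₂, g₁, g₂, ?_⟩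
  simp only [PerrDet_eq_errProb]
  exact squeeze_zero' (.of_forall fun n => errProb_nonneg (isKernel_blockChannel hch n)
    (isPMF_law_blockSource hp₁ h₁ n) (isPMF_law_blockSource hp₂ h₂ n) _ _ _ _)
    ((eventually_gt_atTop 0).mono hle) hε

variable [Fintype V₁] [Fintype V₂]

lemma ReliableDet.achMsg (hch : IsKernel ch) (hp₁ : IsPMF p₁) (hp₂ : IsPMF p₂)
    (hrel : ReliableDet ch p₁ h₁ p₂ h₂)
    (hR : R ∈ Set.Iio (ent p₁ h₁) ×ˢ Set.Iio (condEnt p₁ id h₁) ×ˢ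
      Set.Iio (ent p₂ h₂) ×ˢ Set.Iio (condEnt p₂ id h₂)) : AchMsg ch R := by
  obtain ⟨hR₁, hR₁', hR₂, hR₂'⟩ := hR
  obtain ⟨f₁, f₂, g₁, g₂, hlim⟩ := hrel
  simp only [PerrDet_eq_errProb] at hlim
  obtain ⟨ε₁, hε₁, hred₁⟩ := exists_tendsto_msgSource_reduces hp₁ h₁ hR₁ hR₁'
  obtain ⟨ε₂, hε₂, hred₂⟩ := exists_tendsto_msgSource_reduces hp₂ h₂ hR₂ hR₂'
  refine achMsg_of_hasCode hch (fun n hn => ⟨le_logb_msgSize_div _ hn, le_logb_msgSize_div _ hn,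
    le_logb_msgSize_div _ hn, le_logb_msgSize_div _ hn⟩)
    (by simpa only [add_zero] using (hlim.add hε₁).add hε₂) fun n => ?_
  exact HasCode.of_reduces (isKernel_blockChannel hch n) isPMF_law_msgSource isPMF_law_msgSource
    ⟨f₁ n, f₂ n, g₁ n, g₂ n, le_rfl⟩ (hred₁ n) (hred₂ n)

lemma AchMsg.reliableDet (hch : IsKernel ch) (hp₁ : IsPMF p₁) (hp₂ : IsPMF p₂)
    (hach : AchMsg ch R)
    (hR : R ∈ Set.Ioi (ent p₁ h₁) ×ˢ Set.Ioi (condEnt p₁ id h₁) ×ˢ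
      Set.Ioi (ent p₂ h₂) ×ˢ Set.Ioi (condEnt p₂ id h₂)) : ReliableDet ch p₁ h₁ p₂ h₂ := by
  obtain ⟨hR₁, hR₁', hR₂, hR₂'⟩ := hR
  obtain ⟨M₁, M₁', M₂, M₂', f₁, f₂, g₁, g₂, hrate, hlim⟩ := hach
  simp only [PerrMsg_eq_errProb] at hlim
  obtain ⟨ε₁, hε₁, hred₁⟩ := exists_tendsto_reduces_msgSource hp₁ h₁ hR₁ hR₁'
    (fun n hn => (hrate n hn).1) (fun n hn => (hrate n hn).2.1)
  obtain ⟨ε₂, hε₂, hred₂⟩ := exists_tendsto_reduces_msgSource hp₂ h₂ hR₂ hR₂'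
    (fun n hn => (hrate n hn).2.2.1) (fun n hn => (hrate n hn).2.2.2)
  refine reliableDet_of_hasCode hch hp₁ hp₂
    (by simpa only [add_zero] using (hlim.add hε₁).add hε₂) fun n hn => ?_
  exact HasCode.of_reduces (isKernel_blockChannel hch n) (isPMF_law_blockSource hp₁ h₁ n)
    (isPMF_law_blockSource hp₂ h₂ n) ⟨f₁ n, f₂ n, g₁ n, g₂ n, le_rfl⟩ (hred₁ n hn) (hred₂ n hn)

lemma mem_closure_Iio_prod (a b c d : ℝ) :
    (a, b, c, d) ∈ closure (Set.Iio a ×ˢ Set.Iio b ×ˢ Set.Iio c ×ˢ Set.Iio d) := by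
  simp [closure_prod_eq]

lemma mem_closure_Ioi_prod (a b c d : ℝ) :
    (a, b, c, d) ∈ closure (Set.Ioi a ×ˢ Set.Ioi b ×ˢ Set.Ioi c ×ˢ Set.Ioi d) := by
  simp [closure_prod_eq]

lemma exists_mem_Ioi_prod_of_mem_interior_closure {S : Set (ℝ × ℝ × ℝ × ℝ)} {a b c d : ℝ}
    (h : (a, b, c, d) ∈ interior (closure S)) :
    ∃ R ∈ S, R ∈ Set.Ioi a ×ˢ Set.Ioi b ×ˢ Set.Ioi c ×ˢ Set.Ioi d := by
  obtain ⟨x, hx, hquad⟩ := mem_closure_iff.mp (mem_closure_Ioi_prod a b c d) _ isOpen_interior h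
  have hopen : IsOpen (Set.Ioi a ×ˢ Set.Ioi b ×ˢ Set.Ioi c ×ˢ Set.Ioi d) :=
    isOpen_Ioi.prod (isOpen_Ioi.prod (isOpen_Ioi.prod isOpen_Ioi))
  obtain ⟨R, hR, hRS⟩ := mem_closure_iff.mp (interior_subset hx) _ hopen hquad
  exact ⟨R, hRS, hR⟩

end CapacityRegion

theorem stmt4 (ch : X1 × X2 → Y1 × Y2 → ℝ)
    (pU1 : U1 → ℝ) (h1 : U1 → V1) (pU2 : U2 → ℝ) (h2 : U2 → V2)
    (hch : IsKernel ch) (hpU1 : IsPMF pU1) (hpU2 : IsPMF pU2) :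
    (((ent pU1 h1, condEnt pU1 id h1, ent pU2 h2, condEnt pU2 id h2) : ℝ × ℝ × ℝ × ℝ) ∈
        interior (capMsg ch) → ReliableDet ch pU1 h1 pU2 h2) ∧
    (((ent pU1 h1, condEnt pU1 id h1, ent pU2 h2, condEnt pU2 id h2) : ℝ × ℝ × ℝ × ℝ) ∉
        capMsg ch → ¬ ReliableDet ch pU1 h1 pU2 h2) := by
  constructor
  · intro hint
    obtain ⟨R, hach, hR⟩ := exists_mem_Ioi_prod_of_mem_interior_closure hint
    exact hach.reliableDet hch hpU1 hpU2 hR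
  · intro hnot hrel
    exact hnot <| closure_mono (fun R hR => hrel.achMsg hch hpU1 hpU2 hR) <|
      mem_closure_Iio_prod _ _ _ _

end Stmt4

end Paper
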